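/- Let E be a real inner product space and let e_x : ℝ → E be differentiable on [0,T] with T ≥ 0, and let e_y, e_z : ℝ → F, G be functions into normed spaces. Under hypotheses (i)–(iv) of the finite-horizon bound with constants K_yz, K_yx, L_y, ε̄ ≥ 0 and μ ∈ ℝ, where the uniform interface bound ‖e_z(t)‖ ≤ ε̄ holds for all t ∈ [0,T], it holds for EVERY t ∈ [0,T] (not only at the final time) that ‖e_x(t)‖ + ‖e_y(t)‖ ≤ [(1 + K_yx)·L_y·K_yz·Φ(T,α) + K_yz]·ε̄, where α = μ + L_y·K_yx. -/

import Mathlib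

/-!
Substituting the bounds on `e_y` and `e_z` into the one-sided estimate for `e_x` gives
`⟪ẋ, x⟫ ≤ (α‖x‖ + c)‖x‖` with `x = e_x`, `α = μ + L_y K_yx` and `c = L_y K_yz ε`; formally
this is the Grönwall inequality `d‖x‖/dt ≤ α‖x‖ + c`. The norm need not be differentiable at the
zeros of `x`, so `‖x‖²` is compared instead with the square of a slightly enlarged, strictly
positive Grönwall bound, and the enlargement is then sent to zero.
-/

open RealInnerProductSpace

/-- Horizon-dependent amplification factor: `Φ(T,α) = (e^{αT} − 1)/α` for `α ≠ 0`,
and `Φ(T,0) = T`. -/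
noncomputable def Phi (T α : ℝ) : ℝ :=
  if α = 0 then T else (Real.exp (α * T) - 1) / α

open Set Filter Topology

section Phi

theorem gronwallBound_eq_mul_exp_add_mul_Phi (δ K ε t : ℝ) :
    gronwallBound δ K ε t = δ * Real.exp (K * t) + ε * Phi t K := by
  unfold gronwallBound Phi
  split_ifs with hK
  · simp [hK]
  · ring

theorem Phi_zero_left (α : ℝ) : Phi 0 α = 0 := by
  simp [Phi]

theorem hasDerivAt_Phi (t α : ℝ) : HasDerivAt (Phi · α) (Real.exp (α * t)) t := by
  have h_eq : gronwallBound 0 α 1 = (Phi · α) := by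
    funext s
    simp [gronwallBound_eq_mul_exp_add_mul_Phi]
  have h_deriv : α * Phi t α + 1 = Real.exp (α * t) := by
    unfold Phi
    split_ifs with hα
    · simp [hα]
    · field_simp
      ring
  simpa only [h_eq, h_deriv] using hasDerivAt_gronwallBound 0 α 1 t

theorem monotone_Phi (α : ℝ) : Monotone (Phi · α) :=
  monotone_of_hasDerivAt_nonneg (fun t ↦ hasDerivAt_Phi t α) fun _ ↦ (Real.exp_pos _).le

theorem Phi_nonneg {t : ℝ} (ht : 0 ≤ t) (α : ℝ) : 0 ≤ Phi t α :=
  (Phi_zero_left α).ge.trans (monotone_Phi α ht)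

theorem gronwallBound_pos {δ ε t : ℝ} (hδ : 0 < δ) (hε : 0 ≤ ε) (ht : 0 ≤ t) (K : ℝ) :
    0 < gronwallBound δ K ε t := by
  have := Phi_nonneg ht K
  rw [gronwallBound_eq_mul_exp_add_mul_Phi]
  positivity

end Phi

section InnerGronwall

variable {E : Type*} [NormedAddCommGroup E] [InnerProductSpace ℝ E] {f f' : ℝ → E} {a b : ℝ}

theorem image_norm_le_of_inner_deriv_right_lt_deriv_boundary {B B' : ℝ → ℝ}
    (hf : ContinuousOn f (Icc a b)) (hf' : ∀ x ∈ Ico a b, HasDerivWithinAt f (f' x) (Ici x) x)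
    (ha : ‖f a‖ ≤ B a) (hB : ∀ x, HasDerivAt B (B' x) x) (hB_nonneg : ∀ x ∈ Icc a b, 0 ≤ B x)
    (bound : ∀ x ∈ Ico a b, ‖f x‖ = B x → ⟪f' x, f x⟫ < B' x * B x) :
    ∀ x ∈ Icc a b, ‖f x‖ ≤ B x := by
  intro x hx
  have h_deriv_sq (y : ℝ) : HasDerivAt (fun z ↦ B z ^ 2) (2 * (B' y * B y)) y :=
    ((hB y).fun_pow 2).congr_deriv (by ring)
  have h_sq_bound : ∀ y ∈ Ico a b, ‖f y‖ ^ 2 = B y ^ 2 → 2 * ⟪f y, f' y⟫ < 2 * (B' y * B y) := by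
    intro y hy h_eq
    have h_norm : ‖f y‖ = B y :=
      (pow_left_inj₀ (norm_nonneg _) (hB_nonneg y (Ico_subset_Icc_self hy)) two_ne_zero).1 h_eq
    rw [real_inner_comm]
    linarith [bound y hy h_norm]
  have h_sq : ‖f x‖ ^ 2 ≤ B x ^ 2 :=
    image_le_of_deriv_right_lt_deriv_boundary (hf.norm.pow 2) (fun y hy ↦ (hf' y hy).norm_sq)
      (pow_le_pow_left₀ (norm_nonneg _) ha 2) h_deriv_sq h_sq_bound hx
  exact le_of_sq_le_sq h_sq (hB_nonneg x hx)

theorem norm_le_gronwallBound_of_inner_deriv_right_le {δ K ε : ℝ}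
    (hf : ContinuousOn f (Icc a b)) (hf' : ∀ x ∈ Ico a b, HasDerivWithinAt f (f' x) (Ici x) x)
    (ha : ‖f a‖ ≤ δ) (hε : 0 ≤ ε) (bound : ∀ x ∈ Ico a b, ⟪f' x, f x⟫ ≤ (K * ‖f x‖ + ε) * ‖f x‖) :
    ∀ x ∈ Icc a b, ‖f x‖ ≤ gronwallBound δ K ε (x - a) := by
  intro x hx
  have h_enlarged : ∀ η > 0, ‖f x‖ ≤ gronwallBound (δ + η) K (ε + η) (x - a) := by
    intro η hη
    have h_pos : ∀ y ∈ Icc a b, 0 < gronwallBound (δ + η) K (ε + η) (y - a) := fun y hy ↦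
      gronwallBound_pos (by linarith [norm_nonneg (f a)]) (by positivity) (sub_nonneg.2 hy.1) K
    refine image_norm_le_of_inner_deriv_right_lt_deriv_boundary hf hf' ?_
      (fun y ↦ hasDerivAt_gronwallBound_shift (δ + η) K (ε + η) y a)
      (fun y hy ↦ (h_pos y hy).le) (fun y hy h_eq ↦ ?_) x hx
    · rw [sub_self, gronwallBound_x0]
      linarith
    · have h_norm_pos : 0 < ‖f y‖ := h_eq ▸ h_pos y (Ico_subset_Icc_self hy)
      rw [← h_eq]
      calc ⟪f' y, f y⟫ ≤ (K * ‖f y‖ + ε) * ‖f y‖ := bound y hy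
        _ < (K * ‖f y‖ + (ε + η)) * ‖f y‖ := by gcongr; linarith
  have h_cont : Continuous fun η ↦ gronwallBound (δ + η) K (ε + η) (x - a) := by
    simp only [gronwallBound_eq_mul_exp_add_mul_Phi]
    fun_prop
  have h_lim : Tendsto (fun η ↦ gronwallBound (δ + η) K (ε + η) (x - a)) (𝓝[>] 0)
      (𝓝 (gronwallBound δ K ε (x - a))) :=
    (h_cont.tendsto' 0 _ (by simp only [add_zero])).mono_left nhdsWithin_le_nhds
  exact ge_of_tendsto h_lim (eventually_mem_nhdsWithin.mono h_enlarged)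

end InnerGronwall

theorem conformal_to_closedloop_bound_general
    {E F G : Type*} [NormedAddCommGroup E] [InnerProductSpace ℝ E]
    [SeminormedAddCommGroup F] [SeminormedAddCommGroup G]
    {T : ℝ} {e_x e_x' : ℝ → E} {e_y : ℝ → F} {e_z : ℝ → G} {K_yz K_yx L_y ε μ : ℝ}
    (hcont : ContinuousOn e_x (Icc 0 T))
    (hderiv : ∀ t ∈ Ico 0 T, HasDerivWithinAt e_x (e_x' t) (Ici t) t)
    (hKyz : 0 ≤ K_yz) (hKyx : 0 ≤ K_yx) (hLy : 0 ≤ L_y)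
    (hy : ∀ t ∈ Icc 0 T, ‖e_y t‖ ≤ K_yz * ‖e_z t‖ + K_yx * ‖e_x t‖)
    (hx : ∀ t ∈ Ico 0 T, ⟪e_x' t, e_x t⟫ ≤ μ * ‖e_x t‖ ^ 2 + L_y * ‖e_y t‖ * ‖e_x t‖)
    (hz : ∀ t ∈ Icc 0 T, ‖e_z t‖ ≤ ε) :
    ∀ t ∈ Icc 0 T,
      ‖e_x t‖ + ‖e_y t‖ ≤ (1 + K_yx) * Real.exp ((μ + L_y * K_yx) * t) * ‖e_x 0‖ +
        ((1 + K_yx) * L_y * K_yz * Phi t (μ + L_y * K_yx) + K_yz) * ε := by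
  intro t ht
  have hε : 0 ≤ ε := (norm_nonneg _).trans (hz t ht)
  have h_output : ∀ s ∈ Icc 0 T, ‖e_y s‖ ≤ K_yz * ε + K_yx * ‖e_x s‖ := fun s hs ↦
    (hy s hs).trans (by gcongr; exact hz s hs)
  have h_inner : ∀ s ∈ Ico 0 T,
      ⟪e_x' s, e_x s⟫ ≤ ((μ + L_y * K_yx) * ‖e_x s‖ + L_y * K_yz * ε) * ‖e_x s‖ := fun s hs ↦
    calc ⟪e_x' s, e_x s⟫ ≤ μ * ‖e_x s‖ ^ 2 + L_y * ‖e_y s‖ * ‖e_x s‖ := hx s hs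
      _ ≤ μ * ‖e_x s‖ ^ 2 + L_y * (K_yz * ε + K_yx * ‖e_x s‖) * ‖e_x s‖ := by
        gcongr
        exact h_output s (Ico_subset_Icc_self hs)
      _ = ((μ + L_y * K_yx) * ‖e_x s‖ + L_y * K_yz * ε) * ‖e_x s‖ := by ring
  have h_state : ‖e_x t‖ ≤ ‖e_x 0‖ * Real.exp ((μ + L_y * K_yx) * t) +
      L_y * K_yz * ε * Phi t (μ + L_y * K_yx) := by
    simpa only [sub_zero, gronwallBound_eq_mul_exp_add_mul_Phi] using
      norm_le_gronwallBound_of_inner_deriv_right_le hcont hderiv le_rfl (by positivity) h_inner t ht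
  calc ‖e_x t‖ + ‖e_y t‖ ≤ (1 + K_yx) * ‖e_x t‖ + K_yz * ε := by linarith [h_output t ht]
    _ ≤ (1 + K_yx) * (‖e_x 0‖ * Real.exp ((μ + L_y * K_yx) * t) +
          L_y * K_yz * ε * Phi t (μ + L_y * K_yx)) + K_yz * ε := by gcongr
    _ = _ := by ring

/-- Proposition 1: a uniform calibrated interface bound `ε̄` yields a uniform
simulator-level deviation bound at every time `t ∈ [0,T]`. -/
theorem conformal_to_closedloop_bound
    {E F G : Type*} [NormedAddCommGroup E] [InnerProductSpace ℝ E]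
    [NormedAddCommGroup F] [NormedSpace ℝ F]
    [NormedAddCommGroup G] [NormedSpace ℝ G]
    (T : ℝ) (hT : 0 ≤ T)
    (e_x : ℝ → E) (e_y : ℝ → F) (e_z : ℝ → G)
    (hdiff : ∀ t ∈ Set.Icc (0 : ℝ) T, DifferentiableAt ℝ e_x t)
    (K_yz K_yx L_y ε μ : ℝ)
    (hKyz : 0 ≤ K_yz) (hKyx : 0 ≤ K_yx) (hLy : 0 ≤ L_y) (hε : 0 ≤ ε)
    (h1 : ∀ t ∈ Set.Icc (0 : ℝ) T, ‖e_y t‖ ≤ K_yz * ‖e_z t‖ + K_yx * ‖e_x t‖)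
    (h2 : ∀ t ∈ Set.Icc (0 : ℝ) T,
      ⟪deriv e_x t, e_x t⟫ ≤ μ * ‖e_x t‖ ^ 2 + L_y * ‖e_y t‖ * ‖e_x t‖)
    (h3 : ∀ t ∈ Set.Icc (0 : ℝ) T, ‖e_z t‖ ≤ ε)
    (h4 : e_x 0 = 0) :
    ∀ t ∈ Set.Icc (0 : ℝ) T,
      ‖e_x t‖ + ‖e_y t‖ ≤ ((1 + K_yx) * L_y * K_yz * Phi T (μ + L_y * K_yx) + K_yz) * ε := by
  intro t ht
  have h := conformal_to_closedloop_bound_general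
    (fun s hs ↦ (hdiff s hs).continuousAt.continuousWithinAt)
    (fun s hs ↦ (hdiff s (Ico_subset_Icc_self hs)).hasDerivAt.hasDerivWithinAt)
    hKyz hKyx hLy h1 (fun s hs ↦ h2 s (Ico_subset_Icc_self hs)) h3 t ht
  rw [h4, norm_zero, mul_zero, zero_add] at h
  exact h.trans (by gcongr; exact monotone_Phi _ ht.2)
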